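/- arXiv:1608.07350 — 2 statements merged into one kernel-verified Lean document; each statement's English description precedes it below -/
import Mathlib

section
/- Let r ∈ ℤ, let 1 ≤ h ≤ n, and set j = v̄_p(h). Then E_h(M_L^r) ⊆ M_K^{⌈(i_j + hr)/n⌉}, and consequently g_h(r) ≥ ⌈(i_j + hr)/n⌉. -/
open scoped Classical

/-- `Ecoef K L h α` is `E_h(α) = e_h(σ₁(α),…,σₙ(α))`, characterized by the fact that
`(-1)^h * E_h(α)` is the coefficient of `X^(n-h)` in the characteristic polynomial of
multiplication by `α` on `L` as a `K`-vector space. -/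
noncomputable def Ecoef (K L : Type) [Field K] [Field L] [Algebra K L]
    [FiniteDimensional K L] (h : ℕ) (α : L) : K :=
  (-1) ^ h * ((LinearMap.mulLeft K α).charpoly.coeff (Module.finrank K L - h))

/-- `cCoef K L πL n h` is `c_h`, where the minimal polynomial of the uniformizer `πL` is
`X^n - c₁X^{n-1} + ⋯ + (-1)^{n-1}c_{n-1}X + (-1)^n c_n`. -/
noncomputable def cCoef (K L : Type) [Field K] [Field L] [Algebra K L]
    (πL : L) (n h : ℕ) : K :=
  (-1) ^ h * (minpoly K πL).coeff (n - h)

/-- The valuation of `x`, with value `⊤` at `x = 0`. -/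
noncomputable def vext (L : Type) [Field L] (vL : L → ℤ) (x : L) : WithTop ℤ :=
  if x = 0 then ⊤ else (vL x : WithTop ℤ)

/-- `iPi p ν n K vK c j` is `i_j^{π_L} = min{ n·v_K(c_h) - h : 1 ≤ h ≤ n, v̄_p(h) ≤ j }`,
an element of `ℤ_{≥0} ∪ {∞}`. -/
noncomputable def iPi (p ν n : ℕ) (K : Type) [Field K] (vK : K → ℤ) (c : ℕ → K)
    (j : ℕ) : WithTop ℤ :=
  ((Finset.Icc 1 n).filter fun h => min (padicValNat p h) ν ≤ j).inf fun h =>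
    if c h = 0 then ⊤ else (((n : ℤ) * vK (c h) - (h : ℤ) : ℤ) : WithTop ℤ)

/-- `iIdx p ν n K L vK vL c j` is the `j`-th index of inseparability
`i_j = min{ i_{j'}^{π_L} + (j' - j)·e_L : j ≤ j' ≤ ν }`, where `e_L = v_L(p)`
(with `e_L = ∞` when `p = 0` in `L`). -/
noncomputable def iIdx (p ν n : ℕ) (K L : Type) [Field K] [Field L]
    (vK : K → ℤ) (vL : L → ℤ) (c : ℕ → K) (j : ℕ) : WithTop ℤ :=
  (Finset.Icc j ν).inf fun j' =>
    iPi p ν n K vK c j' +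
      (j' - j) • (if (p : L) = 0 then (⊤ : WithTop ℤ) else (vL (p : L) : WithTop ℤ))

/-!
Let `π` be a uniformizer and `w ∈ L` of valuation `r`. An `α ∈ M_L^r` is `∑ a_m π^m` with
`a_m ∈ K`, and since the terms have distinct valuations, `F(X) = w⁻¹ ∑ a_m π^m X^m` has integral
coefficients. The quotients `σ_i(α) / w` are the values `F(x_i)` at `x_i = σ_i(π) / π`, so
`E_h(α) = w^h D`, where the integral polynomial `D` expresses `e_h(F(x_1), …, F(x_n))` in the
elementary symmetric functions `e_k(x) = E_k(π) / π^k`.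

Let `q = p^t` divide `n`. Modulo all `e_k` with `q ∤ k`, Newton's identities show that `q` divides
every power sum `∑ x_i^m`, hence every power sum of the `F(x_i)`, hence `h e_h(F(x_1), …, F(x_n))`.
So a coefficient of `D` at a monomial that involves only `e_k` with `p^t ∣ k` is divisible by
`p^(t - v_p(h))`. Taking `t` as large as possible for each monomial, every term of `D` is seen to
have valuation at least `i_j`.
-/

section SymmetricFunctions

open MvPolynomial

variable {A B : Type*} [CommRing A] [CommRing B] {n : ℕ}

/-- The elementary symmetric polynomial `e_k(x_1, …, x_n)` as an element of the algebra of symmetric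
polynomials. -/
noncomputable def esymmSymm (A : Type*) [CommRing A] (n k : ℕ) : symmetricSubalgebra (Fin n) A :=
  ⟨esymm (Fin n) A k, esymm_isSymmetric _ _ _⟩

/-- The power sum `x_1^k + ⋯ + x_n^k` as an element of the algebra of symmetric polynomials. -/
noncomputable def psumSymm (A : Type*) [CommRing A] (n k : ℕ) : symmetricSubalgebra (Fin n) A :=
  ⟨psum (Fin n) A k, psum_isSymmetric _ _ _⟩

lemma esymmSymm_eq_zero {k : ℕ} (hk : n < k) : esymmSymm A n k = 0 := by
  ext1
  simp only [esymmSymm, esymm, ZeroMemClass.coe_zero]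
  rw [Finset.powersetCard_eq_empty.2 (by simpa using hk), Finset.sum_empty]

lemma psumSymm_zero : psumSymm A n 0 = n := by
  ext1
  simp [psumSymm]

lemma mul_esymmSymm_eq_sum (k : ℕ) : k * esymmSymm A n k = (-1) ^ (k + 1) *
    ∑ a ∈ Finset.HasAntidiagonal.antidiagonal k with a.1 < k,
      (-1) ^ a.1 * esymmSymm A n a.1 * psumSymm A n a.2 := by
  ext1
  simpa [esymmSymm, psumSymm] using mul_esymm_eq_sum (Fin n) A k

lemma psumSymm_eq_mul_esymmSymm_sub_sum {k : ℕ} (hk : 0 < k) :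
    psumSymm A n k = (-1) ^ (k + 1) * k * esymmSymm A n k -
      ∑ a ∈ Finset.HasAntidiagonal.antidiagonal k with a.1 ∈ Set.Ioo 0 k,
        (-1) ^ a.1 * esymmSymm A n a.1 * psumSymm A n a.2 := by
  ext1
  simpa [esymmSymm, psumSymm] using psum_eq_mul_esymm_sub_sum (Fin n) A k hk

/-- The endomorphism `P(x_1, …, x_n) ↦ P(f(x_1), …, f(x_n))` of the algebra of symmetric
polynomials. -/
noncomputable def substSymm (n : ℕ) (f : Polynomial A) :
    symmetricSubalgebra (Fin n) A →ₐ[A] symmetricSubalgebra (Fin n) A :=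
  ((bind₁ fun i => Polynomial.aeval (X i) f).comp (Subalgebra.val _)).codRestrict _ fun P e => by
    have rename_aeval (i : Fin n) : rename e (Polynomial.aeval (X i : MvPolynomial (Fin n) A) f) =
        Polynomial.aeval (X (e i)) f := by
      rw [← Polynomial.aeval_algHom_apply, rename_X]
    simp only [AlgHom.comp_apply, Subalgebra.coe_val, rename_bind₁, rename_aeval]
    conv_rhs => rw [← (mem_symmetricSubalgebra _).1 P.2 e, bind₁_rename]
    rfl

lemma coe_substSymm (f : Polynomial A) (P : symmetricSubalgebra (Fin n) A) :
    (substSymm n f P : MvPolynomial (Fin n) A) =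
      bind₁ (fun i => Polynomial.aeval (X i) f) (P : MvPolynomial (Fin n) A) := rfl

lemma substSymm_psumSymm (f : Polynomial A) (l : ℕ) :
    substSymm n f (psumSymm A n l) = (f ^ l).sum fun m a => a • psumSymm A n m := by
  ext1
  have aeval_pow (i : Fin n) : Polynomial.aeval (X i : MvPolynomial (Fin n) A) f ^ l =
      (f ^ l).sum fun m a => a • X i ^ m := by
    rw [← map_pow, Polynomial.aeval_def, Polynomial.eval₂_eq_sum]
    simp only [algebraMap_eq, smul_eq_C_mul]
  simp only [coe_substSymm, psumSymm, psum, map_sum, map_pow, bind₁_X_right, aeval_pow,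
    Polynomial.sum_def, AddSubmonoidClass.coe_finsetSum, SetLike.val_smul, Finset.smul_sum]
  exact Finset.sum_comm

/-- Writes a symmetric polynomial as a polynomial in `c_k = e_k(x_1, …, x_n)` and sets `c_k = 0` for
all `k` not divisible by `q`. The variable of index `i` stands for `c_{i+1}`. -/
noncomputable def symmRestrict (A : Type*) [CommRing A] (n q : ℕ) :
    symmetricSubalgebra (Fin n) A →ₐ[A] MvPolynomial {i : Fin n // q ∣ (i : ℕ) + 1} A :=
  (killCompl Subtype.val_injective).comp (esymmAlgEquiv (Fin n) A (Fintype.card_fin n)).symm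

lemma symmRestrict_esymmSymm_of_not_dvd {q k : ℕ} (hk : ¬ q ∣ k) :
    symmRestrict A n q (esymmSymm A n k) = 0 := by
  have hk0 : k ≠ 0 := by rintro rfl; exact hk (dvd_zero q)
  obtain ⟨k, rfl⟩ := Nat.exists_eq_succ_of_ne_zero hk0
  rcases le_or_gt n k with hnk | hkn
  · rw [esymmSymm_eq_zero (Nat.lt_succ_of_le hnk), map_zero]
  · have symm_apply : (esymmAlgEquiv (Fin n) A (Fintype.card_fin n)).symm
        (esymmSymm A n (k + 1)) = X ⟨k, hkn⟩ := esymmAlgEquiv_symm_apply A _ ⟨k, hkn⟩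
    refine (congrArg (killCompl Subtype.val_injective) symm_apply).trans ?_
    simp [killCompl, hk]

lemma natCast_dvd_symmRestrict_psumSymm {q : ℕ} (hq : q ∣ n) (k : ℕ) :
    (q : MvPolynomial {i : Fin n // q ∣ (i : ℕ) + 1} A) ∣
      symmRestrict A n q (psumSymm A n k) := by
  induction k using Nat.strong_induction_on with
  | _ k ih =>
  rcases Nat.eq_zero_or_pos k with rfl | hk
  · rw [psumSymm_zero, map_natCast]
    exact Nat.cast_dvd_cast hq
  rw [psumSymm_eq_mul_esymmSymm_sub_sum hk, map_sub, map_sum]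
  refine dvd_sub ?_ (Finset.dvd_sum fun a ha => ?_)
  · by_cases hqk : q ∣ k
    · rw [map_mul, map_mul, map_natCast]
      exact ((Nat.cast_dvd_cast hqk).mul_left _).mul_right _
    · rw [map_mul, symmRestrict_esymmSymm_of_not_dvd hqk, mul_zero]
      exact dvd_zero _
  · simp only [Finset.mem_filter, Finset.HasAntidiagonal.mem_antidiagonal, Set.mem_Ioo] at ha
    rw [map_mul]
    exact (ih a.2 (by omega)).mul_left _

lemma natCast_dvd_mul_symmRestrict_substSymm_esymmSymm {q : ℕ} (hq : q ∣ n) (f : Polynomial A)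
    (h : ℕ) : (q : MvPolynomial {i : Fin n // q ∣ (i : ℕ) + 1} A) ∣
      h * symmRestrict A n q (substSymm n f (esymmSymm A n h)) := by
  have newton := congrArg (fun P => symmRestrict A n q (substSymm n f P))
    (mul_esymmSymm_eq_sum (A := A) (n := n) h)
  simp only [map_mul, map_natCast, map_sum] at newton
  rw [newton]
  refine (Finset.dvd_sum fun a _ => ?_).mul_left _
  rw [substSymm_psumSymm, Polynomial.sum_def, map_sum]
  refine (Finset.dvd_sum fun m _ => ?_).mul_left _
  rw [map_smul]
  exact dvd_smul_of_dvd _ (natCast_dvd_symmRestrict_psumSymm hq m)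

/-- The polynomial `D` with `e_h(f(x_1), …, f(x_n)) = D(c_1, …, c_n)`, where
`c_k = e_k(x_1, …, x_n)`. The variable of index `i` stands for `c_{i+1}`. -/
noncomputable def esymmComp (n : ℕ) (f : Polynomial A) (h : ℕ) : MvPolynomial (Fin n) A :=
  (esymmAlgEquiv (Fin n) A (Fintype.card_fin n)).symm (substSymm n f (esymmSymm A n h))

lemma aeval_esymm_esymmComp (f : Polynomial A) (h : ℕ) :
    aeval (fun i : Fin n => esymm (Fin n) A (i + 1)) (esymmComp n f h) =
      bind₁ (fun i => Polynomial.aeval (X i) f) (esymm (Fin n) A h) := by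
  rw [← esymmAlgHom_apply]
  exact congrArg Subtype.val ((esymmAlgEquiv (Fin n) A (Fintype.card_fin n)).apply_symm_apply _)

lemma map_esymmComp (φ : A →+* B) (f : Polynomial A) (h : ℕ) :
    map φ (esymmComp n f h) = esymmComp n (f.map φ) h := by
  apply esymmAlgHom_injective (σ := Fin n) B (Fintype.card_fin n).ge
  apply Subtype.ext
  rw [esymmAlgHom_apply, esymmAlgHom_apply, aeval_esymm_esymmComp]
  have key := congrArg (map φ) (aeval_esymm_esymmComp f h (n := n))
  rw [map_aeval, map_bind₁, map_esymm] at key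
  simp only [map_esymm] at key
  have map_aeval_X (i : Fin n) : map φ (Polynomial.aeval (X i : MvPolynomial (Fin n) A) f) =
      Polynomial.aeval (X i) (f.map φ) := by
    simp [Polynomial.aeval_def, Polynomial.hom_eval₂, Polynomial.eval₂_map]
  simp only [map_aeval_X] at key
  rw [← key, aeval_def, eval₂_map, coe_eval₂Hom]
  congr 1
  ext
  simp

lemma eval_map_esymmComp (φ : A →+* B) (c : Fin n → A) (f : Polynomial A) (h : ℕ) :
    eval (fun i => φ (c i)) (esymmComp n (f.map φ) h) = φ (eval c (esymmComp n f h)) := by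
  rw [← map_esymmComp, eval_map]
  exact (eval₂_comp φ c _).symm

lemma natCast_dvd_mul_coeff_esymmComp {q : ℕ} (hq : q ∣ n) (f : Polynomial A) (h : ℕ)
    {d : Fin n →₀ ℕ} (hd : ∀ i ∈ d.support, q ∣ (i : ℕ) + 1) :
    (q : A) ∣ h * coeff d (esymmComp n f h) := by
  have hd' : (d.comapDomain (Subtype.val : {i : Fin n // q ∣ (i : ℕ) + 1} → Fin n)
      Subtype.val_injective.injOn).mapDomain Subtype.val = d :=
    Finsupp.mapDomain_comapDomain _ Subtype.val_injective _ fun i hi => ⟨⟨i, hd i hi⟩, rfl⟩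
  obtain ⟨w, hw⟩ := natCast_dvd_mul_symmRestrict_substSymm_esymmSymm hq f h
  have key := congrArg (coeff (d.comapDomain _ Subtype.val_injective.injOn)) hw
  rw [← nsmul_eq_mul, ← nsmul_eq_mul, coeff_smul, coeff_smul, symmRestrict, AlgHom.comp_apply,
    coeff_killCompl, hd', nsmul_eq_mul, nsmul_eq_mul] at key
  exact ⟨_, key⟩

section Coeff

variable {p : ℕ} [Fact p.Prime]

lemma pow_sub_padicValNat_dvd_of_dvd_mul [IsDomain A] [CharZero A] {t h : ℕ} (hh : h ≠ 0) {a : A}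
    (ha : (p : A) ^ t ∣ h * a) : (p : A) ^ (t - padicValNat p h) ∣ a := by
  have hp : p.Prime := Fact.out
  rcases le_total t (padicValNat p h) with hle | hle
  · rw [Nat.sub_eq_zero_of_le hle, pow_zero]
    exact one_dvd a
  set m := h / p ^ padicValNat p h
  have hm : p ^ padicValNat p h * m = h := by
    simpa only [Nat.factorization_def h hp] using Nat.ordProj_mul_ordCompl_eq_self h p
  have hpm : p.Coprime m := by
    simpa only [Nat.factorization_def h hp] using Nat.coprime_ordCompl hp hh
  have hpm' : IsCoprime ((p : A) ^ (t - padicValNat p h)) m := by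
    simpa using ((Nat.isCoprime_iff_coprime.2 hpm).map (Int.castRingHom A)).pow_left
  refine hpm'.dvd_of_dvd_mul_left ?_
  have hp0 : (p : A) ^ padicValNat p h ≠ 0 := pow_ne_zero _ (Nat.cast_ne_zero.2 hp.ne_zero)
  rw [← mul_dvd_mul_iff_left hp0, ← pow_add, Nat.add_sub_cancel' hle, ← mul_assoc]
  exact_mod_cast hm.symm ▸ ha

variable {h : ℕ} (hh : h ≠ 0)
include hh

/- The coefficients come by base change from a ring of integral polynomials, where `p` is not a zero
divisor. -/
lemma pow_sub_padicValNat_dvd_coeff_esymmComp {t : ℕ} (ht : p ^ t ∣ n) (f : Polynomial A)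
    {d : Fin n →₀ ℕ} (hd : ∀ i ∈ d.support, p ^ t ∣ (i : ℕ) + 1) :
    (p : A) ^ (t - padicValNat p h) ∣ coeff d (esymmComp n f h) := by
  let φ : MvPolynomial A ℤ →+* A := (aeval (id : A → A)).toRingHom
  have hφ : Function.Surjective φ := fun a => ⟨X a, by simp [φ]⟩
  obtain ⟨F, rfl⟩ := Polynomial.map_surjective φ hφ f
  have hF := natCast_dvd_mul_coeff_esymmComp ht F h hd
  rw [Nat.cast_pow] at hF
  simpa [← map_esymmComp, coeff_map] using
    map_dvd φ (pow_sub_padicValNat_dvd_of_dvd_mul hh hF)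

variable {I : Ideal A} {ν : ℕ} {c : Fin n → A} (hν : p ^ ν ∣ n)
  (hI : (p : A) ^ (ν - padicValNat p h) ∈ I)
  (hc : ∀ i : Fin n, (p : A) ^ (min (padicValNat p (i + 1)) ν - padicValNat p h) * c i ∈ I)
include hν hI hc

lemma coeff_esymmComp_mul_prod_mem (f : Polynomial A) (d : Fin n →₀ ℕ) :
    coeff d (esymmComp n f h) * ∏ i ∈ d.support, c i ^ d i ∈ I := by
  rcases d.support.eq_empty_or_nonempty with hempty | hne
  · refine I.mul_mem_right _ (I.mem_of_dvd ?_ hI)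
    exact pow_sub_padicValNat_dvd_coeff_esymmComp hh hν f (by simp [hempty])
  · obtain ⟨k, hk, hmin⟩ := Finset.exists_min_image d.support
      (fun i => min (padicValNat p (i + 1)) ν) hne
    refine I.mem_of_dvd (mul_dvd_mul ?_ ?_) (hc k)
    · refine pow_sub_padicValNat_dvd_coeff_esymmComp hh
        ((pow_dvd_pow p (min_le_right _ _)).trans hν) f fun i hi => ?_
      exact (pow_dvd_pow p ((hmin i hi).trans (min_le_left _ _))).trans pow_padicValNat_dvd
    · exact (dvd_pow_self _ (Finsupp.mem_support_iff.1 hk)).trans (Finset.dvd_prod_of_mem _ hk)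

lemma eval_esymmComp_mem (f : Polynomial A) : eval c (esymmComp n f h) ∈ I := by
  rw [eval_eq]
  exact I.sum_mem fun d _ => coeff_esymmComp_mul_prod_mem hh hν hI hc f d

end Coeff

lemma aeval_esymm_esymmComp_of_card_eq [Algebra A B] {s : Multiset B}
    (hs : Multiset.card s = n) (f : Polynomial A) (h : ℕ) :
    aeval (fun i : Fin n => s.esymm (i + 1)) (esymmComp n f h) =
      (s.map (Polynomial.aeval · f)).esymm h := by
  obtain ⟨x, rfl⟩ : ∃ x : Fin n → B, Finset.univ.val.map x = s := by
    induction s using Quotient.inductionOn with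
    | _ l =>
      obtain rfl : l.length = n := hs
      exact ⟨l.get, by simp [Fin.univ_val_map]⟩
  have key := congrArg (aeval x) (aeval_esymm_esymmComp f h (n := n))
  rw [comp_aeval_apply, aeval_bind₁] at key
  simpa only [← Polynomial.aeval_algHom_apply, aeval_X, aeval_esymm_eq_multiset_esymm,
    Multiset.map_map, Function.comp_def] using key

end SymmetricFunctions

section EigenvalueSymmetricFunctions

open Polynomial

variable {ι R S F : Type*} [Fintype ι] [DecidableEq ι] [CommRing R] [CommRing S] [Field F]

lemma card_roots_charpoly [IsAlgClosed F] (M : Matrix ι ι F) :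
    Multiset.card M.charpoly.roots = Fintype.card ι :=
  IsAlgClosed.card_roots_eq_natDegree.trans M.charpoly_natDegree_eq_dim

lemma det_add_scalar_eq_prod_roots_charpoly [IsAlgClosed F] (M : Matrix ι ι F) (a : F) :
    (M + Matrix.scalar ι a).det = (M.charpoly.roots.map (· + a)).prod := by
  have eval_charpoly : M.charpoly.eval (-a) = (M.charpoly.roots.map fun t => -a - t).prod := by
    conv_lhs => rw [(IsAlgClosed.splits M.charpoly).eq_prod_roots_of_monic M.charpoly_monic]
    rw [eval_multiset_prod, Multiset.map_map]
    simp
  have neg_sub_eq : M + Matrix.scalar ι a = -(Matrix.scalar ι (-a) - M) := by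
    rw [map_neg, neg_sub, sub_neg_eq_add]
  rw [neg_sub_eq, Matrix.det_neg, ← Matrix.eval_charpoly, eval_charpoly, ← card_roots_charpoly M,
    ← Multiset.card_map (fun t => -a - t), ← Multiset.prod_map_neg, Multiset.map_map]
  simp [add_comm]

lemma det_aeval_eq_prod_roots_charpoly [IsAlgClosed F] (M : Matrix ι ι F) (g : F[X]) :
    (aeval M g).det = (M.charpoly.roots.map g.eval).prod := by
  induction (IsAlgClosed.splits g) using Submonoid.closure_induction with
  | mem g hg =>
    obtain ⟨a, rfl⟩ | ⟨a, rfl⟩ := hg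
    · simp [Matrix.algebraMap_eq_diagonal, card_roots_charpoly]
    · simpa using! det_add_scalar_eq_prod_roots_charpoly M a
  | one => simp
  | mul g₁ g₂ _ _ h₁ h₂ =>
    simp only [map_mul, Matrix.det_mul, h₁, h₂, eval_mul, Multiset.prod_map_mul]

lemma charpoly_aeval_eq_prod [IsAlgClosed F] (M : Matrix ι ι F) (f : F[X]) :
    (aeval M f).charpoly = ((M.charpoly.roots.map f.eval).map fun t => X - C t).prod := by
  refine funext fun t => ?_
  have det_eq := det_aeval_eq_prod_roots_charpoly M (C t - f)
  rw [map_sub, aeval_C] at det_eq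
  rw [Matrix.eval_charpoly, eval_multiset_prod, Multiset.map_map, Multiset.map_map]
  exact det_eq.trans (by simp)

/-- The `h`-th elementary symmetric function of the eigenvalues of a matrix, for `h` at most the
size of the matrix; it is read off the characteristic polynomial. -/
noncomputable def eigenEsymm (M : Matrix ι ι R) (h : ℕ) : R :=
  (-1) ^ h * M.charpoly.coeff (Fintype.card ι - h)

lemma eigenEsymm_map (φ : R →+* S) (M : Matrix ι ι R) (h : ℕ) :
    eigenEsymm (M.map φ) h = φ (eigenEsymm M h) := by
  simp [eigenEsymm, Matrix.charpoly_map]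

lemma map_aeval_matrix (φ : R →+* S) (M : Matrix ι ι R) (f : R[X]) :
    (aeval M f).map φ = aeval (M.map φ) (f.map φ) := by
  have h := map_aeval_eq_aeval_map (φ := φ) (ψ := φ.mapMatrix (m := ι)) ?_ f M
  · exact h
  · ext a i j
    simp [Matrix.algebraMap_matrix_apply, apply_ite φ]

lemma eigenEsymm_aeval_eq_esymm_roots [IsAlgClosed F] (M : Matrix ι ι F) (f : F[X]) {h : ℕ}
    (hh : h ≤ Fintype.card ι) :
    eigenEsymm (aeval M f) h = (M.charpoly.roots.map f.eval).esymm h := by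
  rw [eigenEsymm, charpoly_aeval_eq_prod,
    Multiset.prod_X_sub_C_coeff _ (by simp [card_roots_charpoly]), Multiset.card_map,
    card_roots_charpoly, Nat.sub_sub_self hh, ← mul_assoc, ← mul_pow]
  simp

lemma eigenEsymm_eq_esymm_roots [IsAlgClosed F] (M : Matrix ι ι F) {h : ℕ}
    (hh : h ≤ Fintype.card ι) : eigenEsymm M h = M.charpoly.roots.esymm h := by
  simpa using eigenEsymm_aeval_eq_esymm_roots M X hh

lemma eigenEsymm_aeval {n : ℕ} (hn : Fintype.card ι = n) (M : Matrix ι ι F) (f : F[X]) {h : ℕ}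
    (hh : h ≤ n) :
    eigenEsymm (aeval M f) h =
      MvPolynomial.eval (fun i : Fin n => eigenEsymm M (i + 1)) (esymmComp n f h) := by
  let φ := algebraMap F (AlgebraicClosure F)
  have esymm_eq (i : Fin n) : (M.map φ).charpoly.roots.esymm (i + 1) =
      φ (eigenEsymm M (i + 1)) := by
    rw [← eigenEsymm_map, eigenEsymm_eq_esymm_roots _ (by omega)]
  apply φ.injective
  rw [← eigenEsymm_map, map_aeval_matrix, eigenEsymm_aeval_eq_esymm_roots _ _ (hn ▸ hh)]
  have key := aeval_esymm_esymmComp_of_card_eq ((card_roots_charpoly (M.map φ)).trans hn)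
    (f.map φ) h
  simp only [esymm_eq, coe_aeval_eq_eval] at key
  rw [← key, MvPolynomial.aeval_eq_eval, eval_map_esymmComp]

lemma eigenEsymm_smul (a : F) (M : Matrix ι ι F) {h : ℕ} (hh : h ≤ Fintype.card ι) :
    eigenEsymm (a • M) h = a ^ h * eigenEsymm M h := by
  let φ := algebraMap F (AlgebraicClosure F)
  apply φ.injective
  have smul_eq : a • M = aeval M (C a * X) := by simp [Algebra.smul_def]
  rw [map_mul, map_pow, ← eigenEsymm_map, ← eigenEsymm_map, smul_eq, map_aeval_matrix,
    eigenEsymm_aeval_eq_esymm_roots _ _ hh, eigenEsymm_eq_esymm_roots _ hh]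
  have key := Multiset.pow_smul_esymm (φ a) h (M.map φ).charpoly.roots
  simp only [smul_eq_mul] at key
  rw [key]
  simp

end EigenvalueSymmetricFunctions

section UniformizerScaling

open Polynomial

variable {K L : Type} [Field K] [Field L] [Algebra K L] [FiniteDimensional K L] {n : ℕ}

lemma Ecoef_eq_eigenEsymm (b : Module.Basis (Fin n) K L) (h : ℕ) (α : L) :
    Ecoef K L h α = eigenEsymm (Algebra.leftMulMatrix b α) h := by
  rw [Ecoef, eigenEsymm, Module.finrank_eq_card_basis b, Algebra.leftMulMatrix_apply,
    LinearMap.charpoly_toMatrix]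
  rfl

/-- The quotients `E_k(π) / π ^ k`. The index `i` stands for `k = i + 1`. -/
noncomputable def scaledEcoef (K : Type) {L : Type} [Field K] [Field L] [Algebra K L]
    [FiniteDimensional K L] (π : L) (i : ℕ) : L :=
  algebraMap K L (Ecoef K L (i + 1) π) / π ^ (i + 1)

/- With `σ` ranging over the embeddings of `L`, this is `e_h` applied to
`w⁻¹ σ(α) = F(π⁻¹ σ(π))`, where `F(X) = w⁻¹ f(π X)`. -/
lemma algebraMap_Ecoef_aeval (hrank : Module.finrank K L = n) (π : L) {w : L} (hπ : π ≠ 0)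
    (hw : w ≠ 0) (f : K[X]) {h : ℕ} (hh : h ≤ n) :
    algebraMap K L (Ecoef K L h (aeval π f)) = w ^ h *
      MvPolynomial.eval (fun i : Fin n => scaledEcoef K π i)
        (esymmComp n (C w⁻¹ * (f.map (algebraMap K L)).comp (C π * X)) h) := by
  let b := (Module.finBasis K L).reindex (finCongr hrank)
  let M (α : L) : Matrix (Fin n) (Fin n) L := (Algebra.leftMulMatrix b α).map (algebraMap K L)
  have Ecoef_eq (k : ℕ) (α : L) : algebraMap K L (Ecoef K L k α) = eigenEsymm (M α) k := by
    rw [Ecoef_eq_eigenEsymm b, eigenEsymm_map]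
  have scaled_eq (i : Fin n) : scaledEcoef K π i = eigenEsymm (π⁻¹ • M π) (i + 1) := by
    rw [eigenEsymm_smul _ _ (by simp), ← Ecoef_eq, scaledEcoef, inv_pow, div_eq_inv_mul]
  have comp_eq : aeval (π⁻¹ • M π) (C w⁻¹ * (f.map (algebraMap K L)).comp (C π * X)) =
      w⁻¹ • M (aeval π f) := by
    have smul_smul_eq : aeval (π⁻¹ • M π) (C π * X) = M π := by
      simp [← Algebra.smul_def, hπ]
    rw [map_mul, aeval_C, ← Algebra.smul_def, aeval_comp, smul_smul_eq, ← map_aeval_matrix,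
      aeval_algHom_apply]
  simp only [scaled_eq]
  rw [← eigenEsymm_aeval (Fintype.card_fin n) _ _ hh, comp_eq, eigenEsymm_smul _ _ (by simpa),
    Ecoef_eq, ← mul_assoc, ← mul_pow, mul_inv_cancel₀ hw, one_pow, one_mul]

end UniformizerScaling

section ValuationBounds

variable {R Γ : Type*} [Ring R] [LinearOrderedAddCommMonoidWithTop Γ]

lemma map_sum_eq_inf_of_pairwise {ι : Type*} (v : AddValuation R Γ) {s : Finset ι} {x : ι → R}
    (hx : ∀ i ∈ s, ∀ j ∈ s, i ≠ j → v (x i) = v (x j) → v (x i) = ⊤) :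
    v (∑ i ∈ s, x i) = s.inf fun i => v (x i) := by
  induction s using Finset.induction_on with
  | empty => simp
  | insert a s ha ih =>
    have ih := ih fun i hi j hj => hx i (by simp [hi]) j (by simp [hj])
    rw [Finset.sum_insert ha, Finset.inf_insert, ← ih]
    rcases eq_or_ne (v (x a)) (v (∑ i ∈ s, x i)) with heq | hne
    · have eq_top : v (x a) = ⊤ := by
        rcases s.eq_empty_or_nonempty with rfl | hs
        · simpa using heq
        · obtain ⟨j, hj, hinf⟩ := Finset.exists_mem_eq_inf s hs fun i => v (x i)
          exact hx a (by simp) j (by simp [hj]) (by rintro rfl; exact ha hj)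
            (heq.trans (ih.trans hinf))
      have sum_eq_top := heq.symm.trans eq_top
      rw [eq_top, sum_eq_top, inf_top_eq]
      exact top_unique (v.map_le_add eq_top.ge sum_eq_top.ge)
    · exact v.map_add_of_distinct_val hne

lemma le_map_eval_esymmComp {R Γ : Type*} [CommRing R] [LinearOrderedAddCommGroupWithTop Γ]
    (v : AddValuation R Γ) {p n ν h : ℕ} [Fact p.Prime] (hν : p ^ ν ∣ n)
    (hh : h ≠ 0) {f : Polynomial R} (hf : ∀ m, 0 ≤ v (f.coeff m))
    {c : Fin n → R} (hc : ∀ i, 0 ≤ v (c i)) {B : Γ}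
    (hB : B ≤ v ((p : R) ^ (ν - padicValNat p h)))
    (hcB : ∀ i : Fin n,
      B ≤ v ((p : R) ^ (min (padicValNat p (i + 1)) ν - padicValNat p h) * c i)) :
    B ≤ v (MvPolynomial.eval c (esymmComp n f h)) := by
  let O := v.toValuation.integer
  let I : Ideal O := v.toValuation.leIdeal (Multiplicative.ofAdd (OrderDual.toDual B))
  let c' (i : Fin n) : O := ⟨c i, hc i⟩
  have coeffs_subset : (f.coeffs : Set R) ⊆ O := by
    intro a ha
    obtain ⟨m, -, rfl⟩ := Polynomial.mem_coeffs_iff.1 ha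
    exact hf m
  have mem : MvPolynomial.eval c' (esymmComp n (f.toSubring O coeffs_subset) h) ∈ I :=
    eval_esymmComp_mem hh hν hB hcB _
  rw [← f.map_toSubring O coeffs_subset]
  exact (eval_map_esymmComp O.subtype c' _ h).symm ▸ mem

end ValuationBounds

section TotallyRamified

open Polynomial

variable {K L : Type} [Field K] [Field L] [Algebra K L] {n : ℕ} {v : AddValuation L (WithTop ℤ)}
  (hv : ∀ x : K, x ≠ 0 → ∃ m : ℤ, v (algebraMap K L x) = (n * m : ℤ)) {π : L} (hπ : v π = 1)

include hπ

omit [Algebra K L] in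
lemma uniformizer_ne_zero : π ≠ 0 := by
  rintro rfl
  exact WithTop.top_ne_one (v.map_zero.symm.trans hπ)

include hv

lemma exists_map_mul_pow_eq {a : K} (ha : a ≠ 0) (i : ℕ) :
    ∃ m : ℤ, v (algebraMap K L a * π ^ i) = (n * m + i : ℤ) := by
  obtain ⟨m, hm⟩ := hv a ha
  exact ⟨m, by rw [v.map_mul, v.map_pow, hm, hπ]; simp⟩

lemma map_sum_mul_pow_eq_inf (a : Fin n → K) :
    v (∑ i, algebraMap K L (a i) * π ^ (i : ℕ)) =
      Finset.univ.inf fun i => v (algebraMap K L (a i) * π ^ (i : ℕ)) := by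
  refine map_sum_eq_inf_of_pairwise v fun i _ j _ hij heq => ?_
  by_contra hi
  have hai : a i ≠ 0 := fun h0 => hi (by simp [h0])
  have haj : a j ≠ 0 := fun h0 => hi (heq.trans (by simp [h0]))
  obtain ⟨k, hk⟩ := exists_map_mul_pow_eq hv hπ hai i
  obtain ⟨l, hl⟩ := exists_map_mul_pow_eq hv hπ haj j
  rw [hk, hl, WithTop.coe_inj] at heq
  have hmod := congrArg (· % (n : ℤ)) heq
  simp only [Int.mul_add_emod_self_left] at hmod
  rw [Int.emod_eq_of_lt (by omega) (by omega), Int.emod_eq_of_lt (by omega) (by omega)] at hmod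
  exact hij (Fin.ext (by exact_mod_cast hmod))

lemma map_sum_mul_pow_le (a : Fin n → K) (i : Fin n) :
    v (∑ i, algebraMap K L (a i) * π ^ (i : ℕ)) ≤ v (algebraMap K L (a i) * π ^ (i : ℕ)) :=
  (map_sum_mul_pow_eq_inf hv hπ a).trans_le (Finset.inf_le (Finset.mem_univ i))

lemma linearIndependent_uniformizer_pow : LinearIndependent K fun i : Fin n => π ^ (i : ℕ) := by
  refine Fintype.linearIndependent_iff.2 fun g hg i => ?_
  simp only [Algebra.smul_def] at hg
  have eq_top : v (algebraMap K L (g i) * π ^ (i : ℕ)) = ⊤ :=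
    top_unique (v.map_zero.symm.trans_le (hg ▸ map_sum_mul_pow_le hv hπ g i))
  simpa [uniformizer_ne_zero hπ] using v.top_iff.1 eq_top

variable [FiniteDimensional K L] (hrank : Module.finrank K L = n)

include hrank

lemma exists_powerBasis_gen_eq_uniformizer : ∃ pb : PowerBasis K L, pb.gen = π ∧ pb.dim = n := by
  have : Nonempty (Fin n) := ⟨⟨0, hrank ▸ Module.finrank_pos⟩⟩
  refine ⟨⟨π, n, basisOfLinearIndependentOfCardEqFinrank
    (linearIndependent_uniformizer_pow hv hπ) (by simp [hrank]), by simp⟩, rfl, rfl⟩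

lemma exists_sum_mul_pow_eq (α : L) :
    ∃ a : Fin n → K, α = ∑ i, algebraMap K L (a i) * π ^ (i : ℕ) := by
  obtain ⟨pb, rfl, rfl⟩ := exists_powerBasis_gen_eq_uniformizer hv hπ hrank
  refine ⟨pb.basis.repr α, ?_⟩
  conv_lhs => rw [← pb.basis.sum_repr α]
  simp [Algebra.smul_def]

lemma charpoly_mulLeft_uniformizer : (LinearMap.mulLeft K π).charpoly = minpoly K π := by
  obtain ⟨pb, rfl, -⟩ := exists_powerBasis_gen_eq_uniformizer hv hπ hrank
  rw [← charpoly_leftMulMatrix, Algebra.leftMulMatrix_apply, LinearMap.charpoly_toMatrix]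
  rfl

lemma cCoef_uniformizer (k : ℕ) : cCoef K L π n k = Ecoef K L k π := by
  rw [cCoef, Ecoef, charpoly_mulLeft_uniformizer hv hπ hrank, hrank]

lemma uniformizer_pow_eq_sum :
    π ^ n = ∑ i : Fin n, algebraMap K L (-(minpoly K π).coeff i) * π ^ (i : ℕ) := by
  obtain ⟨pb, rfl, hdim⟩ := exists_powerBasis_gen_eq_uniformizer hv hπ hrank
  have hdeg : (minpoly K pb.gen).natDegree = n := pb.natDegree_minpoly.trans hdim
  have relation := minpoly.aeval K pb.gen
  rw [aeval_eq_sum_range, hdeg, Finset.sum_range_succ, ← hdeg,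
    (minpoly.monic pb.isIntegral_gen).coeff_natDegree, hdeg, one_smul, Finset.sum_range,
    add_comm] at relation
  simpa [Algebra.smul_def] using eq_neg_of_add_eq_zero_left relation

lemma map_scaledEcoef_add {i : ℕ} (hi : i < n) : v (scaledEcoef K π i) + n =
    v (algebraMap K L (-(minpoly K π).coeff (n - 1 - i)) * π ^ (n - 1 - i)) := by
  have hexp : π ^ n = π ^ (n - 1 - i) * π ^ (i + 1) := by
    rw [← pow_add]
    congr 1
    omega
  have hvn : v (π ^ n) = n := by simp [hπ]
  rw [← hvn, ← v.map_mul, scaledEcoef, ← cCoef_uniformizer hv hπ hrank, cCoef, hexp,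
    Nat.sub_sub, add_comm 1 i, mul_left_comm, div_mul_cancel₀ _ (pow_ne_zero _
      (uniformizer_ne_zero hπ)), mul_comm (π ^ _), v.map_mul, v.map_mul, map_mul, v.map_mul]
  rcases neg_one_pow_eq_or K (i + 1) with hs | hs <;> simp [hs, v.map_neg]

lemma map_scaledEcoef_nonneg (i : Fin n) : 0 ≤ v (scaledEcoef K π i) := by
  have hvn : v (π ^ n) = n := by simp [hπ]
  have key := map_sum_mul_pow_le hv hπ (fun i : Fin n => -(minpoly K π).coeff i)
    ⟨n - 1 - i, by omega⟩
  rw [← uniformizer_pow_eq_sum hv hπ hrank, hvn, ← map_scaledEcoef_add hv hπ hrank i.2] at key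
  exact (WithTop.add_le_add_iff_right (WithTop.natCast_ne_top n)).1 ((zero_add _).trans_le key)

lemma map_scaledEcoef_last : v (scaledEcoef K π (n - 1)) = 0 := by
  have hn : 0 < n := hrank ▸ Module.finrank_pos
  have hvn : v (π ^ n) = n := by simp [hπ]
  have key := map_sum_mul_pow_eq_inf hv hπ (fun i : Fin n => -(minpoly K π).coeff i)
  rw [← uniformizer_pow_eq_sum hv hπ hrank, hvn] at key
  obtain ⟨i, -, hi⟩ := Finset.exists_mem_eq_inf Finset.univ ⟨⟨0, hn⟩, Finset.mem_univ _⟩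
    fun i : Fin n => v (algebraMap K L (-(minpoly K π).coeff i) * π ^ (i : ℕ))
  rw [hi] at key
  have hi0 : (i : ℕ) = 0 := by
    have coeff_ne_zero : -(minpoly K π).coeff i ≠ 0 := fun h0 =>
      WithTop.natCast_ne_top n (key.trans (by simp [h0]))
    obtain ⟨m, hm⟩ := exists_map_mul_pow_eq hv hπ coeff_ne_zero i
    have dvd : (n : ℤ) ∣ i := (Int.dvd_add_right (Dvd.intro m rfl)).1
      (dvd_of_eq (by exact_mod_cast key.trans hm))
    exact Nat.eq_zero_of_dvd_of_lt (Int.natCast_dvd_natCast.1 dvd) i.2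
  rw [hi0] at key
  have add_eq := map_scaledEcoef_add hv hπ hrank (Nat.sub_lt hn one_pos)
  rw [Nat.sub_self, ← key] at add_eq
  exact (WithTop.add_right_inj (WithTop.natCast_ne_top n)).1 (add_eq.trans (zero_add _).symm)

/- The bound on `f(π X) / w` is the integrality of `a_m π^m / w` in `α = ∑ a_m π^m`. -/
lemma exists_polynomial_aeval_eq {r : WithTop ℤ} {α : L} (hα : r ≤ v α) :
    ∃ f : K[X], aeval π f = α ∧ ∀ m, r ≤ v (algebraMap K L (f.coeff m) * π ^ m) := by
  obtain ⟨a, rfl⟩ := exists_sum_mul_pow_eq hv hπ hrank α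
  refine ⟨∑ i : Fin n, monomial i (a i), by simp [aeval_monomial], fun m => ?_⟩
  rcases lt_or_ge m n with hm | hm
  · have coeff_eq : (∑ i : Fin n, monomial (i : ℕ) (a i)).coeff m = a ⟨m, hm⟩ := by
      rw [finsetSum_coeff, Finset.sum_eq_single ⟨m, hm⟩] <;>
        simp +contextual [coeff_monomial, Fin.ext_iff]
    rw [coeff_eq]
    exact hα.trans (map_sum_mul_pow_le hv hπ a ⟨m, hm⟩)
  · have coeff_eq : (∑ i : Fin n, monomial (i : ℕ) (a i)).coeff m = 0 := by
      rw [finsetSum_coeff]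
      exact Finset.sum_eq_zero fun i _ => coeff_monomial_of_ne _ (by omega)
    simp [coeff_eq]

lemma add_le_map_Ecoef {p ν h : ℕ} [Fact p.Prime] (hν : p ^ ν ∣ n) (hh : h ≠ 0) (hhn : h ≤ n)
    {B : WithTop ℤ} (hB : B ≤ v ((p : L) ^ (ν - padicValNat p h)))
    (hc : ∀ i : Fin n,
      B ≤ v ((p : L) ^ (min (padicValNat p (i + 1)) ν - padicValNat p h) * scaledEcoef K π i))
    {w α : L} (hw : w ≠ 0) (hα : v w ≤ v α) :
    h • v w + B ≤ v (algebraMap K L (Ecoef K L h α)) := by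
  obtain ⟨f, rfl, hf⟩ := exists_polynomial_aeval_eq hv hπ hrank hα
  rw [algebraMap_Ecoef_aeval hrank π (uniformizer_ne_zero hπ) hw f hhn, v.map_mul, v.map_pow]
  gcongr
  refine le_map_eval_esymmComp v hν hh (fun m => ?_) (map_scaledEcoef_nonneg hv hπ hrank) hB hc
  have coeff_eq : (C w⁻¹ * (f.map (algebraMap K L)).comp (C π * X)).coeff m =
      algebraMap K L (f.coeff m) * π ^ m / w := by
    rw [coeff_C_mul, comp_C_mul_X_coeff, coeff_map, div_eq_inv_mul]
  rw [coeff_eq]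
  refine (WithTop.add_le_add_iff_left (v.ne_top_iff.2 hw)).1 ?_
  rw [add_zero, ← v.map_mul, mul_div_cancel₀ _ hw]
  exact hf m

end TotallyRamified

section IndicesOfInseparability

variable {K L : Type} [Field K] [Field L] {p ν n : ℕ} {vK : K → ℤ} {vL : L → ℤ}

lemma exists_addValuation_eq_vext
    (hmul : ∀ x y : L, x ≠ 0 → y ≠ 0 → vL (x * y) = vL x + vL y)
    (hadd : ∀ x y : L, x ≠ 0 → y ≠ 0 → x + y ≠ 0 → min (vL x) (vL y) ≤ vL (x + y)) :
    ∃ v : AddValuation L (WithTop ℤ), ∀ x, v x = vext L vL x := by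
  refine ⟨AddValuation.of (vext L vL) (if_pos rfl) ?_ (fun x y => ?_) fun x y => ?_,
    fun _ => rfl⟩
  · have map_one : vL 1 = 0 := by simpa using hmul 1 1 one_ne_zero one_ne_zero
    simp [vext, map_one]
  · by_cases hx : x = 0
    · simp [vext, hx]
    by_cases hy : y = 0
    · simp [vext, hy]
    by_cases hxy : x + y = 0
    · simp [vext, hxy]
    simpa only [vext, hx, hy, hxy, if_false, ← WithTop.coe_min, WithTop.coe_le_coe] using
      hadd x y hx hy hxy
  · by_cases hx : x = 0
    · simp [vext, hx]
    by_cases hy : y = 0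
    · simp [vext, hy]
    simp [vext, hx, hy, hmul x y hx hy]

lemma iIdx_le (c : ℕ → K) {j k t : ℕ} (hk : k ≠ 0) (hkn : k ≤ n)
    (hkt : min (padicValNat p k) ν ≤ t) (hjt : j ≤ t) (htν : t ≤ ν) :
    iIdx p ν n K L vK vL c j ≤
      (if c k = 0 then ⊤ else ((n * vK (c k) - k : ℤ) : WithTop ℤ)) +
        (t - j) • vext L vL (p : L) := by
  refine (Finset.inf_le (Finset.mem_Icc.2 ⟨hjt, htν⟩)).trans ?_
  exact add_le_add_left (Finset.inf_le
    (Finset.mem_filter.2 ⟨Finset.mem_Icc.2 ⟨Nat.one_le_iff_ne_zero.2 hk, hkn⟩, hkt⟩)) _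

variable [Algebra K L] {v : AddValuation L (WithTop ℤ)} (hvL : ∀ x, v x = vext L vL x)
  (hvK : ∀ x : K, x ≠ 0 → v (algebraMap K L x) = (n * vK x : ℤ))

include hvK

/- The value `vL 0` is junk, so `vL πL = 1` allows `πL = 0`, for which `cCoef` is read off from
`minpoly K 0 = X`. -/
lemma iIdx_zero_nonpos (hp : p.Prime) (hν : p ^ ν ∣ n) (hn : 1 < n) {j : ℕ} (hj : j ≤ ν) :
    iIdx p ν n K L vK vL (cCoef K L 0 n) j ≤ 0 := by
  have coeff_eq : cCoef K L 0 n (n - 1) = (-1) ^ (n - 1) := by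
    rw [cCoef, minpoly.zero, Nat.sub_sub_self hn.le, Polynomial.coeff_X_one, mul_one]
  have map_coeff : n * vK (cCoef K L 0 n (n - 1)) = 0 := by
    have key := hvK ((-1) ^ (n - 1)) (by simp)
    simp only [map_pow, map_neg, map_one, v.map_pow, v.map_neg, v.map_one, smul_zero] at key
    rw [coeff_eq]
    exact_mod_cast key.symm
  have val_eq : min (padicValNat p (n - 1)) ν = 0 := by
    rcases Nat.eq_zero_or_pos ν with rfl | hν0
    · simp
    rw [padicValNat.eq_zero_of_not_dvd, Nat.zero_min]
    intro hdvd
    have hpn : p ∣ n := (dvd_pow_self p hν0.ne').trans hν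
    exact hp.one_lt.ne' (Nat.dvd_one.1 ((Nat.dvd_sub_iff_right hn.le hpn).1 hdvd))
  refine (iIdx_le _ (k := n - 1) (by omega) (by omega) (val_eq.trans_le (Nat.zero_le j)) le_rfl
    hj).trans ?_
  rw [if_neg (by simp [coeff_eq]), map_coeff, Nat.sub_self, zero_smul, add_zero]
  exact WithTop.coe_le_coe.2 (by omega : (0 - (n - 1 : ℕ) : ℤ) ≤ 0)

omit hvK in
lemma iIdx_zero_eq_top (j : ℕ) : iIdx p ν 1 K L vK vL (cCoef K L 0 1) j = ⊤ := by
  have coeff_eq : cCoef K L 0 1 1 = 0 := by simp [cCoef, minpoly.zero]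
  refine (Finset.inf_eq_top_iff _ _).2 fun t _ => ?_
  rw [iPi, (Finset.inf_eq_top_iff _ _).2 fun k hk => ?_, top_add]
  obtain rfl : k = 1 := by
    simpa using (Finset.mem_filter.1 hk).1
  exact if_pos coeff_eq

variable [FiniteDimensional K L] (hrank : Module.finrank K L = n) {π : L} (hπ : v π = 1)

include hrank hπ

lemma map_scaledEcoef_eq_ite (i : ℕ) : v (scaledEcoef K π i) =
    if cCoef K L π n (i + 1) = 0 then ⊤
    else ((n * vK (cCoef K L π n (i + 1)) - (i + 1 : ℕ) : ℤ) : WithTop ℤ) := by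
  rw [scaledEcoef, ← cCoef_uniformizer (fun x hx => ⟨_, hvK x hx⟩) hπ hrank]
  split_ifs with h0
  · simp [h0]
  · rw [v.map_div, hvK _ h0, v.map_pow, hπ]
    simp

include hvL

lemma iIdx_le_map_mul_scaledEcoef (h : ℕ) (i : Fin n) :
    iIdx p ν n K L vK vL (cCoef K L π n) (min (padicValNat p h) ν) ≤
      v ((p : L) ^ (min (padicValNat p (i + 1)) ν - padicValNat p h) * scaledEcoef K π i) := by
  rw [v.map_mul, v.map_pow, map_scaledEcoef_eq_ite hvK hrank hπ, hvL, add_comm]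
  have exponent_eq : min (padicValNat p (i + 1)) ν - padicValNat p h =
      max (min (padicValNat p (i + 1)) ν) (min (padicValNat p h) ν) - min (padicValNat p h) ν := by
    omega
  rw [exponent_eq]
  exact iIdx_le _ i.1.succ_ne_zero i.2 (le_max_left _ _) (le_max_right _ _) (by simp)

lemma iIdx_le_map_pow (h : ℕ) :
    iIdx p ν n K L vK vL (cCoef K L π n) (min (padicValNat p h) ν) ≤
      v ((p : L) ^ (ν - padicValNat p h)) := by
  have hn : 0 < n := hrank ▸ Module.finrank_pos
  have last_eq := map_scaledEcoef_last (fun x hx => ⟨_, hvK x hx⟩) hπ hrank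
  rw [map_scaledEcoef_eq_ite hvK hrank hπ, Nat.sub_add_cancel hn] at last_eq
  have exponent_eq : ν - padicValNat p h = ν - min (padicValNat p h) ν := by omega
  rw [v.map_pow, hvL, exponent_eq, ← zero_add (_ • _), ← last_eq]
  exact iIdx_le _ hn.ne' le_rfl (min_le_right _ _) (min_le_right _ _) le_rfl

lemma add_iIdx_le_map_Ecoef (hp : p.Prime) (hν : p ^ ν ∣ n) {h : ℕ} (hh : h ≠ 0) (hhn : h ≤ n)
    {w α : L} (hw : w ≠ 0) (hα : v w ≤ v α) :
    h • v w + iIdx p ν n K L vK vL (cCoef K L π n) (min (padicValNat p h) ν) ≤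
      v (algebraMap K L (Ecoef K L h α)) :=
  have : Fact p.Prime := ⟨hp⟩
  add_le_map_Ecoef (fun x hx => ⟨_, hvK x hx⟩) hπ hrank hν hh hhn
    (iIdx_le_map_pow hvL hvK hrank hπ h) (iIdx_le_map_mul_scaledEcoef hvL hvK hrank hπ h) hw hα

omit hvL in
lemma add_iIdx_zero_le_map_Ecoef (hp : p.Prime) (hν : p ^ ν ∣ n) {h j : ℕ} (hh : h ≠ 0)
    (hhn : h ≤ n) (hj : j ≤ ν) (hfin : iIdx p ν n K L vK vL (cCoef K L 0 n) j ≠ ⊤)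
    {w α : L} (hw : w ≠ 0) (hα : v w ≤ v α) :
    h • v w + iIdx p ν n K L vK vL (cCoef K L 0 n) j ≤ v (algebraMap K L (Ecoef K L h α)) := by
  have : Fact p.Prime := ⟨hp⟩
  have hn : 1 < n := by
    refine lt_of_le_of_ne (by omega) ?_
    rintro rfl
    exact hfin (iIdx_zero_eq_top j)
  have map_p_nonneg (t : ℕ) : 0 ≤ v ((p : L) ^ t) := by
    exact_mod_cast (natCast_mem v.toValuation.integer (p ^ t) :)
  refine (add_le_add_right (iIdx_zero_nonpos hvK hp hν hn hj) _).trans ?_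
  refine add_le_map_Ecoef (fun x hx => ⟨_, hvK x hx⟩) hπ hrank hν hh hhn (map_p_nonneg _)
    (fun i => ?_) hw hα
  rw [v.map_mul]
  exact add_nonneg (map_p_nonneg _)
    (map_scaledEcoef_nonneg (fun x hx => ⟨_, hvK x hx⟩) hπ hrank i)

end IndicesOfInseparability

theorem stmt13_general
    (p : ℕ) (hp : p.Prime)
    (K L : Type) [Field K] [Field L] [Algebra K L] [FiniteDimensional K L]
    (n : ℕ) (hrank : Module.finrank K L = n)
    (vK : K → ℤ) (vL : L → ℤ)
    (hvLmul : ∀ x y : L, x ≠ 0 → y ≠ 0 → vL (x * y) = vL x + vL y)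
    (hvLadd : ∀ x y : L, x ≠ 0 → y ≠ 0 → x + y ≠ 0 → min (vL x) (vL y) ≤ vL (x + y))
    (hvLsurj : ∀ m : ℤ, ∃ x : L, x ≠ 0 ∧ vL x = m)
    (hext : ∀ x : K, x ≠ 0 → vL (algebraMap K L x) = (n : ℤ) * vK x)
    (ν : ℕ) (hν : p ^ ν ∣ n)
    (πL : L) (hπ : vL πL = 1)
    (r : ℤ) (h : ℕ) (h1 : 1 ≤ h) (h2 : h ≤ n)
    (ij : ℤ)
    (hij : iIdx p ν n K L vK vL (cCoef K L πL n) (min (padicValNat p h) ν) =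
      ((ij : ℤ) : WithTop ℤ)) :
    ∀ α : L, (α = 0 ∨ r ≤ vL α) →
      (Ecoef K L h α = 0 ∨
        ⌈((ij : ℚ) + (h : ℚ) * (r : ℚ)) / (n : ℚ)⌉ ≤ vK (Ecoef K L h α)) := by
  intro α hα
  obtain ⟨v, hv⟩ := exists_addValuation_eq_vext hvLmul hvLadd
  have map_eq {x : L} (hx : x ≠ 0) : v x = vL x := by rw [hv, vext, if_neg hx]
  have map_eq_one {π : L} (hπ0 : π ≠ 0) (hπ1 : vL π = 1) : v π = 1 := by
    rw [map_eq hπ0, hπ1]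
    rfl
  have map_algebraMap (x : K) (hx : x ≠ 0) : v (algebraMap K L x) = (n * vK x : ℤ) := by
    rw [map_eq (by simpa), hext x hx]
  obtain ⟨w, hw, rfl⟩ := hvLsurj r
  have hwα : v w ≤ v α := by
    rcases eq_or_ne α 0 with rfl | hα0
    · simp
    · simpa [map_eq, hw, hα0] using hα
  have bound : h • v w + ij ≤ v (algebraMap K L (Ecoef K L h α)) := by
    rw [← hij]
    rcases eq_or_ne πL 0 with rfl | hπ0
    · obtain ⟨π, hπ0, hπ1⟩ := hvLsurj 1
      exact add_iIdx_zero_le_map_Ecoef map_algebraMap hrank (map_eq_one hπ0 hπ1) hp hν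
        (by omega) h2 (min_le_right _ _) (hij ▸ WithTop.coe_ne_top) hw hwα
    · exact add_iIdx_le_map_Ecoef hv map_algebraMap hrank (map_eq_one hπ0 hπ) hp hν
        (by omega) h2 hw hwα
  refine or_iff_not_imp_left.2 fun hE => Int.ceil_le.2 ((div_le_iff₀' ?_).2 ?_)
  · exact_mod_cast h1.trans h2
  · rw [map_eq hw, map_algebraMap _ hE, ← WithTop.coe_nsmul, ← WithTop.coe_add,
      WithTop.coe_le_coe, nsmul_eq_mul, add_comm] at bound
    exact_mod_cast bound

theorem stmt13
    (p : ℕ) (hp : p.Prime)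
    (K L : Type) [Field K] [Field L] [Algebra K L] [FiniteDimensional K L]
    [Algebra.IsSeparable K L]
    (n : ℕ) (hn : 0 < n) (hrank : Module.finrank K L = n)
    (vK : K → ℤ) (vL : L → ℤ)
    (hvKmul : ∀ x y : K, x ≠ 0 → y ≠ 0 → vK (x * y) = vK x + vK y)
    (hvKadd : ∀ x y : K, x ≠ 0 → y ≠ 0 → x + y ≠ 0 → min (vK x) (vK y) ≤ vK (x + y))
    (hvKsurj : ∀ m : ℤ, ∃ x : K, x ≠ 0 ∧ vK x = m)
    (hvLmul : ∀ x y : L, x ≠ 0 → y ≠ 0 → vL (x * y) = vL x + vL y)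
    (hvLadd : ∀ x y : L, x ≠ 0 → y ≠ 0 → x + y ≠ 0 → min (vL x) (vL y) ≤ vL (x + y))
    (hvLsurj : ∀ m : ℤ, ∃ x : L, x ≠ 0 ∧ vL x = m)
    (hext : ∀ x : K, x ≠ 0 → vL (algebraMap K L x) = (n : ℤ) * vK x)
    (hcomplete : ∀ s : ℕ → K,
      (∀ m : ℤ, ∃ N : ℕ, ∀ i, N ≤ i → ∀ j, N ≤ j → s i - s j = 0 ∨ m ≤ vK (s i - s j)) →
      ∃ x : K, ∀ m : ℤ, ∃ N : ℕ, ∀ i, N ≤ i → s i - x = 0 ∨ m ≤ vK (s i - x))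
    (hreschar : (p : K) = 0 ∨ 1 ≤ vK (p : K))
    (hresperf : ∀ x : K, (x = 0 ∨ 0 ≤ vK x) →
      ∃ y : K, (y = 0 ∨ 0 ≤ vK y) ∧ (x - y ^ p = 0 ∨ 1 ≤ vK (x - y ^ p)))
    (u ν : ℕ) (hu : ¬ p ∣ u) (hnu : n = u * p ^ ν)
    (πL : L) (hπ : vL πL = 1)
    (r : ℤ) (h : ℕ) (h1 : 1 ≤ h) (h2 : h ≤ n)
    -- `ij` is the `j`-th index of inseparability `i_j` (a finite integer), `j = v̄_p(h)`
    (ij : ℤ)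
    (hij : iIdx p ν n K L vK vL (cCoef K L πL n) (min (padicValNat p h) ν) =
      ((ij : ℤ) : WithTop ℤ)) :
    ∀ α : L, (α = 0 ∨ r ≤ vL α) →
      (Ecoef K L h α = 0 ∨
        ⌈((ij : ℚ) + (h : ℚ) * (r : ℚ)) / (n : ℚ)⌉ ≤ vK (Ecoef K L h α)) :=
  stmt13_general p hp K L n hrank vK vL hvLmul hvLadd hvLsurj hext ν (Dvd.intro_left u hnu.symm)
    πL hπ r h h1 h2 ij hij
end

section
/- Let R be a commutative ring, let n ≥ 1, let 1 ≤ h ≤ n, and let r, N be integers with 1 ≤ r ≤ N. Let a_r, a_{r+1}, …, a_N ∈ R and set φ(X) = a_rX^r + a_{r+1}X^{r+1} + … + a_NX^N. Then in R[X_1,…,X_n] one has e_h(φ(X_1),…,φ(X_n)) = Σ_μ a_μ · m_μ(X_1,…,X_n), where the sum ranges over all multisets μ = {μ_1,…,μ_h} of exactly h positive integers with r ≤ μ_i ≤ N for all i, a_μ = a_{μ_1}a_{μ_2}⋯a_{μ_h}, e_h is the h-th elementary symmetric polynomial in n variables, and m_μ is the monomial symmetric polynomial in n variables associated to μ. -/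
/-!
Both sides have the same coefficient at every exponent vector `d`. Multiplying out
`∏ i ∈ S, φ(X_i)` chooses a positive exponent for each `i ∈ S`, so `X^d` occurs only in the summand
`S = d.support`, with coefficient `∏ i ∈ d.support, a (d i)`. On the right `X^d` occurs only in
`m_μ` for `μ` the multiset of nonzero entries of `d`, and `a_μ` is then the same product.
-/

open scoped Classical

/-- The monomial symmetric polynomial in `n` variables associated to the partition
(multiset of positive integers) `μ`: the sum of all distinct monomials whose multiset of
nonzero exponents equals `μ`. -/
noncomputable def msymmM (n : ℕ) (R : Type) [CommSemiring R] (μ : Multiset ℕ) :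
    MvPolynomial (Fin n) R :=
  ∑ d : Fin n → Fin (μ.sum + 1),
    if (Multiset.map (fun i => (d i : ℕ)) Finset.univ.val).filter (· ≠ 0) = μ then
      MvPolynomial.monomial (Finsupp.equivFunOnFinite.symm fun i => (d i : ℕ)) (1 : R)
    else 0

open Finset MvPolynomial

/-- The multiset of nonzero exponents of the monomial `X^d`, i.e. the partition `μ` for which `X^d`
is a term of `m_μ`. -/
def nonzeroExponents {σ : Type*} (d : σ →₀ ℕ) : Multiset ℕ :=
  d.support.val.map d

section Exponents

variable {σ : Type*} (d : σ →₀ ℕ)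

theorem card_nonzeroExponents : (nonzeroExponents d).card = #d.support :=
  Multiset.card_map _ _

theorem forall_mem_nonzeroExponents {p : ℕ → Prop} :
    (∀ t ∈ nonzeroExponents d, p t) ↔ ∀ i ∈ d.support, p (d i) :=
  Multiset.forall_mem_map_iff

theorem prod_map_nonzeroExponents {M : Type*} [CommMonoid M] (a : ℕ → M) :
    ((nonzeroExponents d).map a).prod = ∏ i ∈ d.support, a (d i) :=
  congrArg Multiset.prod (Multiset.map_map _ _ _)

theorem le_sum_nonzeroExponents (i : σ) : d i ≤ (nonzeroExponents d).sum := by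
  by_cases hi : i ∈ d.support
  · exact Multiset.le_sum_of_mem (Multiset.mem_map_of_mem d hi)
  · simp [Finsupp.notMem_support_iff.mp hi]

theorem filter_ne_zero_map_univ [Fintype σ] :
    (Multiset.map d univ.val).filter (· ≠ 0) = nonzeroExponents d := by
  have support_eq : d.support = univ.filter (d · ≠ 0) := by ext i; simp
  rw [nonzeroExponents, support_eq, Multiset.filter_map, filter_val]
  rfl

end Exponents

theorem sum_sym_ite_eq {α M : Type*} [DecidableEq α] [AddCommMonoid M] (T : Finset α) (k : ℕ)
    (ν : Multiset α) (f : Multiset α → M) :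
    ∑ μ ∈ T.sym k, (if ν = μ then f μ else 0) =
      if ν.card = k ∧ ∀ t ∈ ν, t ∈ T then f ν else 0 := by
  split_ifs with hν
  · obtain ⟨card_eq, mem_T⟩ := hν
    rw [sum_eq_single_of_mem (Sym.mk ν card_eq) (mem_sym_iff.mpr mem_T)]
    · simp
    · exact fun μ _ hne ↦ if_neg fun h ↦ hne (Subtype.ext h.symm)
  · refine sum_eq_zero fun μ hμ ↦ if_neg ?_
    rintro rfl
    exact hν ⟨μ.card_coe, mem_sym_iff.mp hμ⟩

theorem coeff_msymmM {n : ℕ} {R : Type} [CommSemiring R] (μ : Multiset ℕ) (d : Fin n →₀ ℕ) :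
    coeff d (msymmM n R μ) = if nonzeroExponents d = μ then 1 else 0 := by
  let toFinsupp (e : Fin n → Fin (μ.sum + 1)) : Fin n →₀ ℕ :=
    Finsupp.equivFunOnFinite.symm fun i ↦ e i
  have coeff_term (e) :
      coeff d (if (Multiset.map (fun i ↦ (e i : ℕ)) univ.val).filter (· ≠ 0) = μ then
        monomial (toFinsupp e) (1 : R) else 0) =
      if toFinsupp e = d ∧ nonzeroExponents d = μ then 1 else 0 := by
    rw [show Multiset.map (fun i ↦ (e i : ℕ)) univ.val = Multiset.map (toFinsupp e) univ.val
      from rfl, filter_ne_zero_map_univ, apply_ite (coeff d), coeff_monomial, coeff_zero]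
    grind
  rw [msymmM, coeff_sum, sum_congr rfl fun e _ ↦ coeff_term e]
  split_ifs with hμ
  · have lt_bound (i) : d i < μ.sum + 1 :=
      Nat.lt_succ_of_le (hμ ▸ le_sum_nonzeroExponents d i)
    rw [sum_eq_single_of_mem (fun i ↦ ⟨d i, lt_bound i⟩) (mem_univ _)]
    · exact if_pos ⟨by ext; rfl, hμ⟩
    · exact fun e _ hne ↦ if_neg fun h ↦
        hne (funext fun i ↦ Fin.ext (DFunLike.congr_fun h.1 i))
  · exact sum_eq_zero fun e _ ↦ if_neg fun h ↦ hμ h.2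

section Coefficients

variable {σ R : Type*} [CommSemiring R]

theorem prod_sum_C_mul_X_pow (S : Finset σ) (T : σ → Finset ℕ) (a : σ → ℕ → R) :
    ∏ i ∈ S, ∑ t ∈ T i, C (a i t) * X i ^ t =
      ∑ d ∈ S.finsupp T, monomial d (∏ i ∈ S, a i (d i)) := by
  rw [Finset.finsupp, sum_map, prod_sum]
  refine sum_congr (by congr!) fun p _ ↦ ?_
  simp only [C_mul_X_pow_eq_monomial, ← monomial_sum_prod, Function.Embedding.coeFn_mk]
  rw [← Finsupp.indicator_eq_sum_attach_single, ← prod_attach S]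
  simp

theorem mem_finsupp_const_iff {S : Finset σ} {T : Finset ℕ} (hT : 0 ∉ T) {d : σ →₀ ℕ} :
    d ∈ S.finsupp (fun _ ↦ T) ↔ S = d.support ∧ ∀ i ∈ d.support, d i ∈ T := by
  rw [mem_finsupp_iff]
  constructor
  · rintro ⟨support_subset, mem_T⟩
    have subset_support : S ⊆ d.support := fun i hi ↦
      Finsupp.mem_support_iff.mpr (ne_of_mem_of_not_mem (mem_T i hi) hT)
    exact ⟨subset_support.antisymm support_subset, fun i hi ↦ mem_T i (support_subset hi)⟩
  · rintro ⟨rfl, mem_T⟩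
    exact ⟨Subset.rfl, mem_T⟩

theorem coeff_prod_sum_C_mul_X_pow (S : Finset σ) {T : Finset ℕ} (hT : 0 ∉ T) (a : ℕ → R)
    (d : σ →₀ ℕ) :
    coeff d (∏ i ∈ S, ∑ t ∈ T, C (a t) * X i ^ t) =
      if S = d.support ∧ ∀ i ∈ d.support, d i ∈ T then ∏ i ∈ d.support, a (d i) else 0 := by
  simp only [prod_sum_C_mul_X_pow S (fun _ ↦ T) (fun _ ↦ a), coeff_sum, coeff_monomial,
    sum_ite_eq', mem_finsupp_const_iff hT]
  grind

theorem coeff_sum_powersetCard_prod [Fintype σ] (h : ℕ) {T : Finset ℕ} (hT : 0 ∉ T) (a : ℕ → R)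
    (d : σ →₀ ℕ) :
    coeff d (∑ S ∈ powersetCard h univ, ∏ i ∈ S, ∑ t ∈ T, C (a t) * X i ^ t) =
      if (nonzeroExponents d).card = h ∧ ∀ t ∈ nonzeroExponents d, t ∈ T then
        ((nonzeroExponents d).map a).prod
      else 0 := by
  simp only [coeff_sum, coeff_prod_sum_C_mul_X_pow _ hT, ite_and, sum_ite_eq',
    mem_powersetCard_univ, card_nonzeroExponents, forall_mem_nonzeroExponents,
    prod_map_nonzeroExponents]
  congr

end Coefficients

theorem coeff_sum_sym_mul_msymmM {n : ℕ} {R : Type} [CommSemiring R] (T : Finset ℕ) (h : ℕ)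
    (a : ℕ → R) (d : Fin n →₀ ℕ) :
    coeff d (∑ μ ∈ T.sym h, C ((μ : Multiset ℕ).map a).prod * msymmM n R μ) =
      if (nonzeroExponents d).card = h ∧ ∀ t ∈ nonzeroExponents d, t ∈ T then
        ((nonzeroExponents d).map a).prod
      else 0 := by
  simp only [coeff_sum, coeff_C_mul, coeff_msymmM, mul_ite, mul_one, mul_zero]
  exact sum_sym_ite_eq T h (nonzeroExponents d) fun μ ↦ (μ.map a).prod

theorem stmt19_general {R : Type} [CommSemiring R] (n h : ℕ) {T : Finset ℕ} (hT : 0 ∉ T)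
    (a : ℕ → R) :
    ∑ S ∈ powersetCard h (univ : Finset (Fin n)), ∏ i ∈ S, ∑ t ∈ T, C (a t) * X i ^ t =
      ∑ μ ∈ T.sym h, C ((μ : Multiset ℕ).map a).prod * msymmM n R μ := by
  ext d
  rw [coeff_sum_powersetCard_prod h hT, coeff_sum_sym_mul_msymmM]

theorem stmt19 (R : Type) [CommRing R] (n : ℕ) (hn : 1 ≤ n)
    (h : ℕ) (h1 : 1 ≤ h) (h2 : h ≤ n)
    (r N : ℕ) (hr : 1 ≤ r) (hrN : r ≤ N) (a : ℕ → R) :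
    -- `e_h(φ(X₁),…,φ(Xₙ)) = Σ_μ a_μ · m_μ(X₁,…,Xₙ)` where `φ(X) = Σ_{t=r}^{N} a_t X^t`
    -- and `μ` ranges over multisets of `h` integers in `[r, N]`.
    ∑ S ∈ Finset.powersetCard h (Finset.univ : Finset (Fin n)),
        ∏ i ∈ S, (∑ t ∈ Finset.Icc r N, MvPolynomial.C (a t) * MvPolynomial.X i ^ t) =
      ∑ μ ∈ Finset.sym (Finset.Icc r N) h,
        MvPolynomial.C (((μ : Multiset ℕ).map a).prod) * msymmM n R (μ : Multiset ℕ) :=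
  stmt19_general n h (by simp [Nat.ne_of_gt hr]) a
end
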